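/- Let E be a finite-dimensional real inner product space, let M ≥ 1, let L₁, …, L_M : E → ℝ be functions each differentiable at a point θ ∈ E, and set g_m = ∇L_m(θ). Let d be an element of the convex hull C = conv{g₁, …, g_M} with ‖d‖ ≤ ‖v‖ for every v ∈ C, and suppose d ≠ 0. Then there exists t₀ > 0 such that for every t ∈ (0, t₀) and every m ∈ {1, …, M}, L_m(θ − t d) < L_m(θ); that is, −d is a common descent direction that decreases all per-task losses. -/

import Mathlib

/-!
The minimum-norm element `d` of the convex hull is the projection of `0` onto it, so the
variational inequality for projections gives `‖d‖² ≤ ⟪d, w⟫` for every `w` in the hull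
(`norm_sq_le_inner_of_min_norm`). Applied to `w = ∇L_m(θ)`, this makes the derivative of
`t ↦ L_m(θ - t d)` at `0`, which is `-⟪∇L_m(θ), d⟫`, at most `-‖d‖² < 0`; a negative derivative
forces a strict decrease for small `t > 0` (`eventually_lt_of_inner_gradient_pos`). Since there
are finitely many `m`, one threshold `t₀` serves them all.
-/

open RealInnerProductSpace

/-- The variational inequality characterizing the projection of `0` onto a convex set. -/
lemma norm_sq_le_inner_of_min_norm {E : Type*} [NormedAddCommGroup E] [InnerProductSpace ℝ E]
    {K : Set E} (hK : Convex ℝ K) {d : E} (hd : d ∈ K) (hmin : ∀ v ∈ K, ‖d‖ ≤ ‖v‖)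
    {w : E} (hw : w ∈ K) : ‖d‖ ^ 2 ≤ inner ℝ d w := by
  have : Nonempty K := ⟨⟨d, hd⟩⟩
  have hinf : ‖(0 : E) - d‖ = ⨅ w : K, ‖(0 : E) - w‖ := by
    simp only [zero_sub, norm_neg]
    exact le_antisymm (le_ciInf fun v => hmin v v.2)
      (ciInf_le ⟨0, by rintro _ ⟨v, rfl⟩; exact norm_nonneg _⟩ (⟨d, hd⟩ : K))
  have h := (norm_eq_iInf_iff_real_inner_le_zero hK hd).1 hinf w hw
  rw [zero_sub, inner_neg_left, inner_sub_right, real_inner_self_eq_norm_sq] at h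
  linarith

open Filter Topology in
lemma eventually_lt_of_inner_gradient_pos {E : Type*} [NormedAddCommGroup E]
    [InnerProductSpace ℝ E] [CompleteSpace E] {f : E → ℝ} {θ d : E}
    (hf : DifferentiableAt ℝ f θ) (hpos : 0 < inner ℝ (gradient f θ) d) :
    ∀ᶠ t in 𝓝[>] (0 : ℝ), f (θ - t • d) < f θ := by
  have hline : HasDerivAt (fun t : ℝ => θ - t • d) (-d) 0 := by
    simpa using ((hasDerivAt_id (0 : ℝ)).smul_const d).const_sub θ
  have hder : HasDerivAt (fun t : ℝ => f (θ - t • d)) (-inner ℝ (gradient f θ) d) 0 := by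
    have h := hf.hasGradientAt.hasFDerivAt.comp_hasDerivAt_of_eq (0 : ℝ) hline (by simp)
    rw [map_neg, InnerProductSpace.toDual_apply_apply] at h
    exact h
  have hslope := (hder.tendsto_slope.eventually_lt_const (neg_lt_zero.2 hpos)).filter_mono
    (nhdsWithin_mono (0 : ℝ) fun t (ht : 0 < t) => ht.ne')
  filter_upwards [hslope, self_mem_nhdsWithin] with t hs ht
  have ht' : 0 < t := ht
  rw [slope_def_field, sub_zero, div_neg_iff] at hs
  simp only [zero_smul, sub_zero] at hs
  rcases hs with hs | hs <;> linarith [hs.1, hs.2]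


/-- If `d ≠ 0` is a minimum-norm element of the convex hull of the gradients
`g_m = ∇L_m(θ)`, then `−d` is a common descent direction: for small `t > 0`,
`L_m(θ − t d) < L_m(θ)` for all `m`. -/
theorem stmt_8 {E : Type*} [NormedAddCommGroup E] [InnerProductSpace ℝ E]
    [FiniteDimensional ℝ E] (M : ℕ) (hM : 1 ≤ M) (L : Fin M → E → ℝ) (θ : E)
    (hdiff : ∀ m, DifferentiableAt ℝ (L m) θ) (d : E)
    (hd : d ∈ convexHull ℝ (Set.range fun m => gradient (L m) θ))
    (hmin : ∀ v ∈ convexHull ℝ (Set.range fun m => gradient (L m) θ), ‖d‖ ≤ ‖v‖)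
    (hdne : d ≠ 0) :
    ∃ t₀ > (0 : ℝ), ∀ t ∈ Set.Ioo (0 : ℝ) t₀, ∀ m, L m (θ - t • d) < L m θ := by
  have hev : ∀ᶠ t in nhdsWithin (0 : ℝ) (Set.Ioi 0), ∀ m, L m (θ - t • d) < L m θ := by
    refine Filter.eventually_all.2 fun m => eventually_lt_of_inner_gradient_pos (hdiff m) ?_
    have h := norm_sq_le_inner_of_min_norm (convex_convexHull ℝ _) hd hmin
      (subset_convexHull ℝ _ ⟨m, rfl⟩)
    rw [real_inner_comm]
    exact (pow_pos (norm_pos_iff.2 hdne) 2).trans_le h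
  obtain ⟨t₀, ht₀, hsub⟩ := mem_nhdsGT_iff_exists_Ioo_subset.1 hev
  exact ⟨t₀, ht₀, fun t ht => hsub ht⟩
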